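/- Let Δ = {v₁,…,v_N} span V and let R_Δ be the algebra of rational functions P(ξ)/∏_j ⟨ξ,v_j⟩^{n_j} on V*. Let N_Δ ⊆ R_Δ be the span of fractions P/∏_{j∈J} v_j^{n_j} where (v_j, j∈J) do not span V, and let G_Δ be the span of fractions 1/∏_{j∈J} v_j^{n_j} with n_j > 0 and (v_j, j∈J) spanning V. Then R_Δ = G_Δ ⊕ N_Δ, N_Δ is exactly the torsion submodule of R_Δ as a Sym(V*)-module (where Sym(V*) acts by constant-coefficient differential operators), and G_Δ is a free Sym(V*)-module. -/

import Mathlib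

/-! The heart of the matter is a third space: the span `S_Δ` of the simple fractions
`1 / ∏_{j ∈ σ} v_j`, where `(v_j, j ∈ σ)` is a basis of `V`.

*Decomposition.* If the denominator of `P / ∏ v_j ^ n_j` spans, every coordinate is a linear
combination of its vectors, so that a factor of `P` cancels a factor of the denominator; iterating
gives `R_Δ = G_Δ + N_Δ` (`GD_sup_ND`).

*Torsion.* A denominator whose vectors do not span is constant in some direction `γ ≠ 0`, so a high
power of `∂_γ` kills the fraction (`IsDiffAction.exists_apply_eq_zero`).

*Generation.* `S_Δ` generates `G_Δ` under derivatives (`IsDiffAction.frac_mem`): a linear relation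
between the vectors of a denominator rewrites the fraction with fewer vectors, and once the vectors
form a basis, dual derivatives raise the exponents one by one (this uses characteristic zero).

*`S_Δ ∩ N_Δ = 0`* (`simpleFrac_inf_degen`). This is proved more generally, for all vectors of a
subspace `U` instead of `Δ`, by induction on `dim U`. The residue along a hyperplane `a = 0` sends
simple fractions in `U` to simple fractions in a complement of `a` in `U`, and degenerate fractions
to degenerate ones, so all residues of an element of the intersection vanish by induction. The
poles of simple fractions being simple, the element is then a polynomial, of negative degree.

*Independence* (`IsDiffAction.coeff_eq_zero`). Let `b_k` be a basis of `S_Δ` and suppose that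
`∑ c_k(∂) b_k ∈ N_Δ`. Multiplication by a coordinate `ξ_i` preserves `N_Δ` and maps `S_Δ` into
`N_Δ`, and its commutator with `c(∂)` is `(∂c/∂ξ_i)(∂)`; hence
`∑ (∂c_k/∂ξ_i)(∂) b_k ∈ N_Δ` too. By induction on the degree, the `c_k` are constants, and then they
vanish because `S_Δ ∩ N_Δ = 0`. So `(b_k)` is a basis of the module `G_Δ`, the sum `G_Δ + N_Δ` is
direct, and `R_Δ / N_Δ` has no torsion.
-/

open MvPolynomial

/-- The linear form `ξ ↦ ⟨ξ, u⟩` on `V*`, as a polynomial. -/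
noncomputable def linForm {K : Type*} [Field K] {d : ℕ} (u : Fin d → K) :
    MvPolynomial (Fin d) K :=
  ∑ i, MvPolynomial.C (u i) * MvPolynomial.X i

/-- The space `R_Δ` of rational functions `P/∏_j ⟨ξ,v_j⟩^{n_j}`, inside the fraction
field of the polynomial ring. -/
noncomputable def RD {K : Type*} [Field K] {d N : ℕ} (v : Fin N → Fin d → K) :
    Submodule K (FractionRing (MvPolynomial (Fin d) K)) :=
  Submodule.span K
    {x | ∃ (P : MvPolynomial (Fin d) K) (n : Fin N → ℕ),
      x = algebraMap (MvPolynomial (Fin d) K) (FractionRing (MvPolynomial (Fin d) K)) P *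
        (∏ j, algebraMap (MvPolynomial (Fin d) K) (FractionRing (MvPolynomial (Fin d) K))
          (linForm (v j)) ^ n j)⁻¹}

/-- The subspace `N_Δ` spanned by fractions whose denominator vectors do not span. -/
noncomputable def ND {K : Type*} [Field K] {d N : ℕ} (v : Fin N → Fin d → K) :
    Submodule K (FractionRing (MvPolynomial (Fin d) K)) :=
  Submodule.span K
    {x | ∃ (P : MvPolynomial (Fin d) K) (n : Fin N → ℕ),
      Submodule.span K (Set.range fun j : {j : Fin N // n j ≠ 0} => v (j : Fin N)) ≠ ⊤ ∧
      x = algebraMap (MvPolynomial (Fin d) K) (FractionRing (MvPolynomial (Fin d) K)) P *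
        (∏ j, algebraMap (MvPolynomial (Fin d) K) (FractionRing (MvPolynomial (Fin d) K))
          (linForm (v j)) ^ n j)⁻¹}

/-- The subspace `G_Δ` spanned by fractions `1/∏_{j∈J} v_j^{n_j}` with `n_j > 0` and
`(v_j, j ∈ J)` spanning `V`. -/
noncomputable def GD {K : Type*} [Field K] {d N : ℕ} (v : Fin N → Fin d → K) :
    Submodule K (FractionRing (MvPolynomial (Fin d) K)) :=
  Submodule.span K
    {x | ∃ n : Fin N → ℕ,
      Submodule.span K (Set.range fun j : {j : Fin N // n j ≠ 0} => v (j : Fin N)) = ⊤ ∧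
      x = (∏ j, algebraMap (MvPolynomial (Fin d) K) (FractionRing (MvPolynomial (Fin d) K))
          (linForm (v j)) ^ n j)⁻¹}

/-- The constant-coefficient differential operator attached to `D ∈ Sym(V*)`,
acting through commuting derivations `δ i` extending `∂/∂ξ_i`. -/
noncomputable def applyOp {K : Type*} [Field K] {d : ℕ}
    (δ : Fin d → (FractionRing (MvPolynomial (Fin d) K) →ₗ[K]
        FractionRing (MvPolynomial (Fin d) K)))
    (D : MvPolynomial (Fin d) K) :
    FractionRing (MvPolynomial (Fin d) K) →ₗ[K] FractionRing (MvPolynomial (Fin d) K) :=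
  ∑ m ∈ D.support, D.coeff m • (List.ofFn fun i => (δ i) ^ (m i)).prod

namespace BrionVergne

variable {K : Type*} [Field K] {d N : ℕ}

/-- The field of rational functions on `V*`, where `V = Fin d → K`. -/
abbrev RatFun (K : Type*) [Field K] (d : ℕ) := FractionRing (MvPolynomial (Fin d) K)

/-- Polynomials as rational functions. -/
noncomputable abbrev ofPoly : MvPolynomial (Fin d) K →+* RatFun K d :=
  algebraMap (MvPolynomial (Fin d) K) (RatFun K d)

/-- The linear form attached to `u`, as a rational function. -/
noncomputable abbrev lam (u : Fin d → K) : RatFun K d := ofPoly (linForm u)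

lemma linForm_add (u w : Fin d → K) : linForm (u + w) = linForm u + linForm w := by
  simp [linForm, add_mul, Finset.sum_add_distrib]

lemma linForm_smul (c : K) (u : Fin d → K) : linForm (c • u) = C c * linForm u := by
  simp [linForm, Finset.mul_sum, mul_assoc]

/-- `u ↦ linForm u` as a linear map. -/
noncomputable def linFormL : (Fin d → K) →ₗ[K] MvPolynomial (Fin d) K where
  toFun := linForm
  map_add' := linForm_add
  map_smul' c u := by rw [linForm_smul, MvPolynomial.smul_eq_C_mul]; rfl

lemma linFormL_apply (u : Fin d → K) : linFormL u = linForm u := rfl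

lemma coeff_linForm (u : Fin d → K) (i : Fin d) :
    (linForm u).coeff (Finsupp.single i 1) = u i := by
  classical
  simp [linForm, MvPolynomial.coeff_sum, MvPolynomial.coeff_C_mul, MvPolynomial.coeff_X,
    Finsupp.single_left_inj]

lemma linForm_ne_zero {u : Fin d → K} (hu : u ≠ 0) : linForm u ≠ 0 := by
  intro h
  apply hu
  ext i
  rw [← coeff_linForm u i, h]
  simp

lemma linForm_zero : linForm (0 : Fin d → K) = 0 := by simp [linForm]

lemma ofPoly_injective : Function.Injective (ofPoly (K := K) (d := d)) :=
  IsFractionRing.injective _ _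

lemma lam_ne_zero {u : Fin d → K} (hu : u ≠ 0) : lam u ≠ 0 := by
  rw [lam, Ne, map_eq_zero_iff _ ofPoly_injective]
  exact linForm_ne_zero hu

lemma lam_zero : lam (0 : Fin d → K) = 0 := by simp [lam, linForm_zero]

lemma ofPoly_C (c : K) : ofPoly (C c : MvPolynomial (Fin d) K) = algebraMap K (RatFun K d) c := by
  rw [IsScalarTower.algebraMap_apply K (MvPolynomial (Fin d) K) (RatFun K d)]; rfl

lemma lam_smul (c : K) (u : Fin d → K) : lam (c • u) = algebraMap K (RatFun K d) c * lam u := by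
  rw [lam, linForm_smul, map_mul, ofPoly_C]

lemma totalDegree_linForm_le (u : Fin d → K) : (linForm u).totalDegree ≤ 1 := by
  refine MvPolynomial.totalDegree_finsetSum_le fun i _ => ?_
  refine (MvPolynomial.totalDegree_mul _ _).trans ?_
  simp

lemma totalDegree_linForm {u : Fin d → K} (hu : u ≠ 0) : (linForm u).totalDegree = 1 := by
  obtain ⟨i, hi⟩ := Function.ne_iff.1 hu
  refine le_antisymm (totalDegree_linForm_le u) ?_
  have := MvPolynomial.le_totalDegree (p := linForm u) (s := Finsupp.single i 1)
    (by rw [MvPolynomial.mem_support_iff, coeff_linForm]; exact hi)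
  simpa using this

/-! ### Laurent expansion along a hyperplane -/

/-- The substitution `x_i ↦ x_i + g_i (t - a)`; it turns the linear form `a` into the
variable `t` (when `a ⬝ᵥ g = 1`) and fixes the linear forms that vanish on `g`. -/
noncomputable def subst (a g : Fin d → K) :
    MvPolynomial (Fin d) K →+* Polynomial (MvPolynomial (Fin d) K) :=
  MvPolynomial.eval₂Hom (Polynomial.C.comp C)
    (fun i => Polynomial.C (X i - C (g i) * linForm a) + Polynomial.C (C (g i)) * Polynomial.X)

/-- The projection of `V` onto `g = 0` along `a` (when `a ⬝ᵥ g = 1`). -/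
def proj (a g : Fin d → K) : (Fin d → K) →ₗ[K] (Fin d → K) where
  toFun u := u - (u ⬝ᵥ g) • a
  map_add' u w := by rw [add_dotProduct, add_smul]; abel
  map_smul' c u := by simp [smul_dotProduct, smul_sub, mul_smul]

lemma proj_apply (a g u : Fin d → K) : proj a g u = u - (u ⬝ᵥ g) • a := rfl

lemma subst_linForm (a g u : Fin d → K) :
    subst a g (linForm u) = Polynomial.C (linForm (proj a g u)) +
      Polynomial.C (C (u ⬝ᵥ g)) * Polynomial.X := by
  rw [proj_apply, ← linFormL_apply (u - _), map_sub, linFormL_apply, linFormL_apply, linForm_smul]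
  simp only [subst, linForm, map_sum, dotProduct]
  simp [mul_add, mul_sub, Finset.sum_add_distrib, Finset.sum_mul, mul_assoc]

lemma eval_subst (a g : Fin d → K) (P : MvPolynomial (Fin d) K) :
    (subst a g P).eval (linForm a) = P := by
  have : (Polynomial.evalRingHom (linForm a)).comp (subst a g) = RingHom.id _ := by
    apply MvPolynomial.ringHom_ext <;> intro i <;> simp [subst]
  exact DFunLike.congr_fun this P

/-- Polynomials in `t` over the polynomial ring, viewed as Laurent series over the field of
rational functions. -/
noncomputable def polyToLaurent :
    Polynomial (MvPolynomial (Fin d) K) →+* LaurentSeries (RatFun K d) :=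
  (HahnSeries.ofPowerSeries ℤ (RatFun K d)).comp
    ((Polynomial.coeToPowerSeries.ringHom).comp (Polynomial.mapRingHom ofPoly))

lemma polyToLaurent_injective : Function.Injective (polyToLaurent (K := K) (d := d)) := by
  refine HahnSeries.ofPowerSeries_injective.comp ?_
  refine Function.Injective.comp (g := Polynomial.coeToPowerSeries.ringHom) ?_ ?_
  · exact Polynomial.coe_injective _
  · exact Polynomial.map_injective _ ofPoly_injective

lemma expand_aux (a g : Fin d → K) : Function.Injective (polyToLaurent.comp (subst a g)) :=
  polyToLaurent_injective.comp (Function.LeftInverse.injective (eval_subst a g))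

/-- Laurent expansion of a rational function along the hyperplane `a = 0`, transversally to the
direction `g`. -/
noncomputable def expand (a g : Fin d → K) : RatFun K d →+* LaurentSeries (RatFun K d) :=
  IsFractionRing.lift (expand_aux a g)

lemma expand_ofPoly (a g : Fin d → K) (P : MvPolynomial (Fin d) K) :
    expand a g (ofPoly P) = polyToLaurent (subst a g P) :=
  IsFractionRing.lift_algebraMap (expand_aux a g) P

lemma polyToLaurent_C (P : MvPolynomial (Fin d) K) :
    polyToLaurent (Polynomial.C P) = HahnSeries.C (ofPoly P) := by
  simp [polyToLaurent, HahnSeries.ofPowerSeries_C]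

lemma polyToLaurent_X :
    polyToLaurent (Polynomial.X : Polynomial (MvPolynomial (Fin d) K)) =
      HahnSeries.single 1 1 := by
  simp [polyToLaurent, HahnSeries.ofPowerSeries_X]

lemma expand_algebraMap (a g : Fin d → K) (c : K) :
    expand a g (algebraMap K (RatFun K d) c) = HahnSeries.C (algebraMap K (RatFun K d) c) := by
  rw [← ofPoly_C, expand_ofPoly, ← polyToLaurent_C]
  simp [subst]

lemma expand_lam (a g u : Fin d → K) :
    expand a g (lam u) = HahnSeries.C (lam (proj a g u)) +
      HahnSeries.single 1 (algebraMap K (RatFun K d) (u ⬝ᵥ g)) := by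
  rw [lam, expand_ofPoly, subst_linForm, map_add, map_mul, polyToLaurent_C, polyToLaurent_C,
    polyToLaurent_X, ofPoly_C, HahnSeries.C_apply (algebraMap K _ _), HahnSeries.single_mul_single]
  simp

/-- The residue along `a = 0`: the coefficient of `t⁻¹` in the Laurent expansion. -/
noncomputable def residue (a g : Fin d → K) : RatFun K d →ₗ[K] RatFun K d where
  toFun x := (expand a g x).coeff (-1)
  map_add' x y := by simp
  map_smul' c x := by
    rw [Algebra.smul_def, map_mul, expand_algebraMap, HahnSeries.C_mul_eq_smul,
      HahnSeries.coeff_smul, RingHom.id_apply, smul_eq_mul, ← Algebra.smul_def]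

lemma residue_apply (a g : Fin d → K) (x : RatFun K d) :
    residue a g x = (expand a g x).coeff (-1) := rfl

/-- If `Q` vanishes on the hyperplane `a = 0`, then `a` divides `Q`. -/
lemma linForm_dvd_of_coeff_zero (a g : Fin d → K) (Q : MvPolynomial (Fin d) K)
    (h : (expand a g (ofPoly Q)).coeff 0 = 0) : linForm a ∣ Q := by
  have h0 : (subst a g Q).coeff 0 = 0 := by
    rw [expand_ofPoly, polyToLaurent] at h
    have := LaurentSeries.coeff_coe_powerSeries
      (((subst a g Q).map ofPoly : Polynomial (RatFun K d)) : PowerSeries (RatFun K d)) 0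
    rw [Polynomial.coeff_coe, Polynomial.coeff_map] at this
    rw [← map_eq_zero_iff _ (ofPoly_injective (K := K) (d := d)), ← this]
    exact h
  obtain ⟨q, hq⟩ := Polynomial.X_dvd_iff.2 h0
  refine ⟨q.eval (linForm a), ?_⟩
  have h1 := eval_subst a g Q
  rw [hq, Polynomial.eval_mul, Polynomial.eval_X] at h1
  exact h1.symm

lemma inv_C_add_single {L : Type*} [Field L] {p : L} (hp : p ≠ 0) (c : L) :
    (HahnSeries.C p + HahnSeries.single 1 c : LaurentSeries L)⁻¹ =
      HahnSeries.ofPowerSeries ℤ L (PowerSeries.mk fun n => (-c) ^ n * p⁻¹ ^ (n + 1)) := by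
  symm
  apply eq_inv_of_mul_eq_one_left
  have h : (HahnSeries.C p + HahnSeries.single 1 c : LaurentSeries L) =
      HahnSeries.ofPowerSeries ℤ L (PowerSeries.C p + PowerSeries.X * PowerSeries.C c) := by
    rw [map_add, map_mul, HahnSeries.ofPowerSeries_C, HahnSeries.ofPowerSeries_C,
      HahnSeries.ofPowerSeries_X, mul_comm, HahnSeries.C_mul_eq_smul]
    congr 1
    ext n
    simp [HahnSeries.coeff_single]
  rw [h, ← map_mul]
  convert map_one (HahnSeries.ofPowerSeries ℤ L)
  ext n
  rw [mul_add, ← mul_assoc, map_add, PowerSeries.coeff_mul_C, PowerSeries.coeff_mul_C,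
    PowerSeries.coeff_one]
  rcases n with _ | n
  · simp [hp]
  · rw [PowerSeries.coeff_succ_mul_X]
    simp only [PowerSeries.coeff_mk, Nat.add_eq_zero_iff, one_ne_zero, and_false, if_false]
    linear_combination ((-c) ^ (n + 1) * p⁻¹ ^ (n + 1)) * inv_mul_cancel₀ hp

/-! ### Simple fractions meet fractions with degenerate denominators trivially -/

/-- The algebra of rational functions whose poles lie along linear forms in `H`. -/
noncomputable def polesIn (H : Submodule K (Fin d → K)) : Subalgebra K (RatFun K d) :=
  Algebra.adjoin K (Set.range ofPoly ∪ {x | ∃ w ∈ H, x = (lam w)⁻¹})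

/-- The span of the rational functions whose poles lie along linear forms in some proper subspace
of `U`. -/
noncomputable def degen (U : Submodule K (Fin d → K)) : Submodule K (RatFun K d) :=
  ⨆ H : {H : Submodule K (Fin d → K) // H < U}, Subalgebra.toSubmodule (polesIn H.1)

/-- The span of the fractions `1 / (b_1 ⋯ b_k)`, with `b` linearly independent in `U`. -/
noncomputable def simpleFrac (k : ℕ) (U : Submodule K (Fin d → K)) : Submodule K (RatFun K d) :=
  Submodule.span K {x | ∃ b : Fin k → Fin d → K, LinearIndependent K b ∧ (∀ i, b i ∈ U) ∧
    x = ∏ i, (lam (b i))⁻¹}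

lemma inv_lam_mem {H : Submodule K (Fin d → K)} {w : Fin d → K} (hw : w ∈ H) :
    (lam w)⁻¹ ∈ polesIn H := Algebra.subset_adjoin (Or.inr ⟨w, hw, rfl⟩)

lemma ofPoly_mem (H : Submodule K (Fin d → K)) (P : MvPolynomial (Fin d) K) :
    ofPoly P ∈ polesIn H := Algebra.subset_adjoin (Or.inl ⟨P, rfl⟩)

/-- The Laurent series all of whose coefficients lie in the subalgebra `A`. -/
def coeffsIn {L : Type*} [Field L] [Algebra K L] (A : Subalgebra K L) :
    Subring (LaurentSeries L) where
  carrier := {f | ∀ n, f.coeff n ∈ A}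
  mul_mem' {f g} hf hg n := by
    rw [HahnSeries.coeff_mul]
    exact A.sum_mem fun _ _ => A.mul_mem (hf _) (hg _)
  one_mem' n := by
    rw [HahnSeries.coeff_one]
    split_ifs
    exacts [A.one_mem, A.zero_mem]
  add_mem' {f g} hf hg n := A.add_mem (hf n) (hg n)
  zero_mem' n := A.zero_mem
  neg_mem' {f} hf n := A.neg_mem (hf n)

lemma single_mem_coeffsIn {L : Type*} [Field L] [Algebra K L] {A : Subalgebra K L} (n : ℤ) {x : L}
    (hx : x ∈ A) : HahnSeries.single n x ∈ coeffsIn A := by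
  intro m
  rw [HahnSeries.coeff_single]
  split_ifs
  exacts [hx, A.zero_mem]

/-- The Laurent series without polar part. -/
noncomputable abbrev regular (K : Type*) [Field K] (d : ℕ) : Subring (LaurentSeries (RatFun K d)) :=
  (HahnSeries.ofPowerSeries ℤ (RatFun K d)).range

lemma coeff_of_regular {f : LaurentSeries (RatFun K d)} (hf : f ∈ regular K d) {n : ℤ}
    (hn : n < 0) : f.coeff n = 0 := by
  obtain ⟨p, rfl⟩ := hf
  rw [HahnSeries.ofPowerSeries_apply]
  apply HahnSeries.embDomain_of_notMem_range
  rintro ⟨m, hm⟩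
  simp at hm
  omega

lemma coeff_zero_mul_of_regular {f g : LaurentSeries (RatFun K d)} (hf : f ∈ regular K d)
    (hg : g ∈ regular K d) : (f * g).coeff 0 = f.coeff 0 * g.coeff 0 := by
  obtain ⟨p, rfl⟩ := hf
  obtain ⟨q, rfl⟩ := hg
  have h := fun x => LaurentSeries.coeff_coe_powerSeries (R := RatFun K d) x 0
  simp only [Nat.cast_zero] at h
  rw [← map_mul, h, h, h]
  simp

lemma C_mem_regular (x : RatFun K d) : HahnSeries.C x ∈ regular K d :=
  ⟨PowerSeries.C x, HahnSeries.ofPowerSeries_C x⟩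

lemma expand_ofPoly_regular (a g : Fin d → K) (P : MvPolynomial (Fin d) K) :
    expand a g (ofPoly P) ∈ regular K d := by
  rw [expand_ofPoly, polyToLaurent]
  exact ⟨_, rfl⟩

lemma expand_inv_lam {a g u : Fin d → K} (hu : proj a g u ≠ 0) :
    expand a g (lam u)⁻¹ = HahnSeries.ofPowerSeries ℤ (RatFun K d)
      (PowerSeries.mk fun n => (-algebraMap K (RatFun K d) (u ⬝ᵥ g)) ^ n *
        (lam (proj a g u))⁻¹ ^ (n + 1)) := by
  rw [map_inv₀, expand_lam, inv_C_add_single (lam_ne_zero hu)]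

lemma expand_inv_lam_regular {a g u : Fin d → K} (hu : proj a g u ≠ 0) :
    expand a g (lam u)⁻¹ ∈ regular K d := by
  rw [expand_inv_lam hu]
  exact ⟨_, rfl⟩

lemma coeff_zero_expand_inv_lam {a g u : Fin d → K} (hu : proj a g u ≠ 0) :
    (expand a g (lam u)⁻¹).coeff 0 = (lam (proj a g u))⁻¹ := by
  rw [expand_inv_lam hu]
  have := LaurentSeries.coeff_coe_powerSeries (PowerSeries.mk fun n =>
    (-algebraMap K (RatFun K d) (u ⬝ᵥ g)) ^ n * (lam (proj a g u))⁻¹ ^ (n + 1)) 0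
  rw [Nat.cast_zero] at this
  rw [this]
  simp

lemma expand_inv_lam_of_proj {a g u : Fin d → K} (hu : proj a g u = 0) :
    expand a g (lam u)⁻¹ = HahnSeries.single (-1) (algebraMap K (RatFun K d) (u ⬝ᵥ g)⁻¹) := by
  rw [map_inv₀, expand_lam, hu, lam_zero, RingHom.map_zero, zero_add, HahnSeries.inv_single,
    map_inv₀ (algebraMap K (RatFun K d))]

lemma proj_self {a g : Fin d → K} (hag : a ⬝ᵥ g = 1) : proj a g a = 0 := by
  simp [proj_apply, hag]

lemma eq_smul_of_proj {a g u : Fin d → K} (hu : proj a g u = 0) : u = (u ⬝ᵥ g) • a :=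
  sub_eq_zero.1 hu

/-- Expanding a function with poles in `H` along `a = 0` yields coefficients with poles in the
projection of `H`. -/
lemma expand_mem_coeffsIn (a g : Fin d → K) (H : Submodule K (Fin d → K))
    {x : RatFun K d} (hx : x ∈ polesIn H) :
    expand a g x ∈ coeffsIn (polesIn (H.map (proj a g))) := by
  induction hx using Algebra.adjoin_induction with
  | mem x hx =>
    rcases hx with ⟨P, rfl⟩ | ⟨w, hw, rfl⟩
    · intro n
      rcases lt_or_ge n 0 with hn | hn
      · rw [coeff_of_regular (expand_ofPoly_regular a g P) hn]
        exact Subalgebra.zero_mem _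
      · lift n to ℕ using hn
        rw [expand_ofPoly, polyToLaurent]
        simp only [RingHom.comp_apply]
        rw [LaurentSeries.coeff_coe_powerSeries]
        simp only [Polynomial.coeToPowerSeries.ringHom_apply, Polynomial.coeff_coe,
          Polynomial.coe_mapRingHom, Polynomial.coeff_map]
        exact ofPoly_mem _ _
    · by_cases hu : proj a g w = 0
      · rw [expand_inv_lam_of_proj hu]
        exact single_mem_coeffsIn _ (Subalgebra.algebraMap_mem _ _)
      · intro n
        rcases lt_or_ge n 0 with hn | hn
        · rw [coeff_of_regular (expand_inv_lam_regular hu) hn]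
          exact Subalgebra.zero_mem _
        · lift n to ℕ using hn
          rw [expand_inv_lam hu, LaurentSeries.coeff_coe_powerSeries, PowerSeries.coeff_mk]
          exact Subalgebra.mul_mem _
            (Subalgebra.pow_mem _ (Subalgebra.neg_mem _ (Subalgebra.algebraMap_mem _ _)) _)
            (Subalgebra.pow_mem _ (inv_lam_mem (Submodule.mem_map_of_mem hw)) _)
  | algebraMap r =>
    rw [expand_algebraMap]
    exact single_mem_coeffsIn _ (Subalgebra.algebraMap_mem _ _)
  | add x y _ _ hx hy => rw [map_add]; exact add_mem hx hy
  | mul x y _ _ hx hy => rw [map_mul]; exact mul_mem hx hy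

/-- A function with poles in `H` has no pole along `a ∉ H`. -/
lemma expand_regular {a g : Fin d → K} {H : Submodule K (Fin d → K)} (ha : a ∉ H)
    {x : RatFun K d} (hx : x ∈ polesIn H) : expand a g x ∈ regular K d := by
  induction hx using Algebra.adjoin_induction with
  | mem x hx =>
    rcases hx with ⟨P, rfl⟩ | ⟨w, hw, rfl⟩
    · exact expand_ofPoly_regular a g P
    · by_cases hu : proj a g w = 0
      · have h0 : w ⬝ᵥ g = 0 := by
          by_contra hc
          have := H.smul_mem (w ⬝ᵥ g)⁻¹ hw
          rw [eq_smul_of_proj hu, smul_smul] at this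
          apply ha
          rw [← eq_smul_of_proj hu, inv_mul_cancel₀ hc, one_smul] at this
          exact this
        rw [eq_smul_of_proj hu, h0, zero_smul, lam_zero]
        simp
      · exact expand_inv_lam_regular hu
  | algebraMap r => rw [expand_algebraMap]; exact C_mem_regular _
  | add x y _ _ hx hy => rw [map_add]; exact add_mem hx hy
  | mul x y _ _ hx hy => rw [map_mul]; exact mul_mem hx hy

lemma ker_proj_le {a g : Fin d → K} {H : Submodule K (Fin d → K)} (ha : a ∈ H) :
    LinearMap.ker (proj a g) ≤ H := by
  intro u hu
  rw [eq_smul_of_proj (LinearMap.mem_ker.1 hu)]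
  exact H.smul_mem _ ha

lemma map_proj_lt {a g : Fin d → K} {H U : Submodule K (Fin d → K)} (hH : H < U) (ha : a ∈ H) :
    H.map (proj a g) < U.map (proj a g) := by
  refine lt_of_le_of_ne (Submodule.map_mono hH.le) fun heq => hH.not_ge fun u hu => ?_
  have hm : proj a g u ∈ H.map (proj a g) := heq ▸ Submodule.mem_map_of_mem hu
  obtain ⟨w, hw, hwu⟩ := hm
  have : u - w ∈ H := ker_proj_le ha (g := g) (by rw [LinearMap.mem_ker, map_sub, hwu, sub_self])
  simpa using H.add_mem this hw

lemma polesIn_le_degen {H U : Submodule K (Fin d → K)} (h : H < U) {x : RatFun K d}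
    (hx : x ∈ polesIn H) : x ∈ degen U :=
  Submodule.mem_iSup_of_mem (p := fun H : {H // H < U} => Subalgebra.toSubmodule (polesIn H.1))
    ⟨H, h⟩ hx

lemma residue_degen {a g : Fin d → K} {U : Submodule K (Fin d → K)}
    {x : RatFun K d} (hx : x ∈ degen U) : residue a g x ∈ degen (U.map (proj a g)) := by
  induction hx using Submodule.iSup_induction' with
  | zero => rw [map_zero]; exact zero_mem _
  | add x y _ _ hx hy => rw [map_add]; exact add_mem hx hy
  | mem H y hy =>
  obtain ⟨H, hH⟩ := H
  replace hy : y ∈ polesIn H := hy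
  rw [residue_apply]
  by_cases ha : a ∈ H
  · have hlt := map_proj_lt (g := g) hH ha
    exact polesIn_le_degen hlt (expand_mem_coeffsIn a g H hy (-1))
  · rw [coeff_of_regular (expand_regular ha hy) (by norm_num)]
    exact Submodule.zero_mem _

lemma expand_prod_regular {ι : Type*} (a g : Fin d → K) (b : ι → Fin d → K) (s : Finset ι)
    (hb : ∀ j ∈ s, proj a g (b j) ≠ 0) :
    expand a g (∏ j ∈ s, (lam (b j))⁻¹) ∈ regular K d ∧
      (expand a g (∏ j ∈ s, (lam (b j))⁻¹)).coeff 0 = ∏ j ∈ s, (lam (proj a g (b j)))⁻¹ := by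
  classical
  induction s using Finset.induction_on with
  | empty => exact ⟨by rw [Finset.prod_empty, map_one]; exact one_mem _, by simp⟩
  | insert i s hi ih =>
    obtain ⟨h1, h2⟩ := ih fun j hj => hb j (Finset.mem_insert_of_mem hj)
    have hi' := hb i (Finset.mem_insert_self i s)
    rw [Finset.prod_insert hi, Finset.prod_insert hi, map_mul]
    refine ⟨mul_mem (expand_inv_lam_regular hi') h1, ?_⟩
    rw [coeff_zero_mul_of_regular (expand_inv_lam_regular hi') h1, h2,
      coeff_zero_expand_inv_lam hi']

lemma single_one_mem_regular : HahnSeries.single 1 1 ∈ regular K d :=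
  ⟨PowerSeries.X, HahnSeries.ofPowerSeries_X⟩

/-- A simple fraction has at most a simple pole along `a`, and its residue there is a simple
fraction in one variable less. -/
lemma simpleFrac_expand {a g : Fin d → K} {k : ℕ}
    {U : Submodule K (Fin d → K)} {x : RatFun K d}
    (hx : x ∈ simpleFrac (k + 1) U) :
    residue a g x ∈ simpleFrac k (U.map (proj a g)) ∧
      HahnSeries.single 1 1 * expand a g x ∈ regular K d := by
  induction hx using Submodule.span_induction with
  | zero => exact ⟨by rw [map_zero]; exact zero_mem _, by rw [map_zero, mul_zero]; exact zero_mem _⟩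
  | add x y _ _ hx hy =>
    exact ⟨by rw [map_add]; exact add_mem hx.1 hy.1,
      by rw [map_add, mul_add]; exact add_mem hx.2 hy.2⟩
  | smul c x _ hx =>
    refine ⟨by rw [map_smul]; exact Submodule.smul_mem _ _ hx.1, ?_⟩
    rw [Algebra.smul_def, map_mul, expand_algebraMap, mul_left_comm]
    exact mul_mem (C_mem_regular _) hx.2
  | mem x hx =>
    obtain ⟨b, hb, hbU, rfl⟩ := hx
    by_cases h : ∃ i, proj a g (b i) = 0
    · obtain ⟨i, hi⟩ := h
      have hli : LinearIndependent K (proj a g ∘ (b ∘ i.succAbove)) := by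
        refine (hb.comp _ Fin.succAbove_right_injective).map ?_
        have hdis := hb.disjoint_span_image (s := Set.range i.succAbove) (t := {i})
          (by simp [Set.disjoint_singleton_right])
        rw [← Set.range_comp, Set.image_singleton] at hdis
        refine hdis.mono_right fun u hu => ?_
        obtain ⟨c, hc, hbi⟩ : ∃ c : K, c ≠ 0 ∧ b i = c • a :=
          ⟨b i ⬝ᵥ g, fun h0 => hb.ne_zero i (by rw [eq_smul_of_proj hi, h0, zero_smul]),
            eq_smul_of_proj hi⟩
        rw [Submodule.mem_span_singleton]
        refine ⟨(u ⬝ᵥ g) * c⁻¹, ?_⟩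
        rw [hbi, smul_smul, mul_assoc, inv_mul_cancel₀ hc, mul_one]
        exact (eq_smul_of_proj (LinearMap.mem_ker.1 hu)).symm
      obtain ⟨h1, h2⟩ := expand_prod_regular a g (b ∘ i.succAbove) Finset.univ
        fun j _ => hli.ne_zero j
      rw [Fin.prod_univ_succAbove _ i, residue_apply, map_mul, expand_inv_lam_of_proj hi]
      constructor
      · rw [HahnSeries.coeff_single_mul, sub_self, ← Algebra.smul_def]
        refine Submodule.smul_mem _ _ (Submodule.subset_span ⟨_, hli, ?_, ?_⟩)
        · exact fun j => Submodule.mem_map_of_mem (hbU _)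
        · exact h2
      · rw [← mul_assoc, HahnSeries.single_mul_single, one_mul, add_neg_cancel,
          ← HahnSeries.C_apply]
        exact mul_mem (C_mem_regular _) h1
    · push Not at h
      obtain ⟨h1, -⟩ := expand_prod_regular a g b Finset.univ fun j _ => h j
      refine ⟨?_, mul_mem single_one_mem_regular h1⟩
      rw [residue_apply, coeff_of_regular h1 (by norm_num)]
      exact zero_mem _

lemma regular_of_residue {f : LaurentSeries (RatFun K d)}
    (h : HahnSeries.single 1 1 * f ∈ regular K d) (h0 : f.coeff (-1) = 0) : f ∈ regular K d := by
  obtain ⟨p, hp⟩ := h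
  have hc : PowerSeries.constantCoeff p = 0 := by
    have := LaurentSeries.coeff_coe_powerSeries p 0
    rw [hp, HahnSeries.coeff_single_mul] at this
    simpa [h0] using this.symm
  obtain ⟨q, rfl⟩ := PowerSeries.X_dvd_iff.2 hc
  refine ⟨q, ?_⟩
  rw [map_mul, HahnSeries.ofPowerSeries_X] at hp
  exact mul_left_cancel₀ (HahnSeries.single_ne_zero one_ne_zero) hp

lemma totalDegree_prod_linForm (T : List (Fin d → K)) :
    (T.map linForm).prod.totalDegree ≤ T.length := by
  induction T with
  | nil => simp
  | cons a T ih =>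
    rw [List.map_cons, List.prod_cons, List.length_cons]
    refine (MvPolynomial.totalDegree_mul _ _).trans ?_
    have := totalDegree_linForm_le a
    omega

/-- An element of `simpleFrac k U` has degree at most `-k`: it is `Q / ∏ T` for a list `T` of
linear forms, with `deg Q + k ≤ |T|`. -/
lemma simpleFrac_degree {k : ℕ} {U : Submodule K (Fin d → K)} {a : Fin d → K} (ha : a ≠ 0)
    (haU : a ∈ U) {x : RatFun K d} (hx : x ∈ simpleFrac k U) :
    ∃ (T : List (Fin d → K)) (Q : MvPolynomial (Fin d) K), (∀ w ∈ T, w ≠ 0 ∧ w ∈ U) ∧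
      x * ofPoly (T.map linForm).prod = ofPoly Q ∧ Q.totalDegree + k ≤ T.length := by
  induction hx using Submodule.span_induction with
  | zero =>
    refine ⟨List.replicate k a, 0, fun w hw => ?_, by simp, by simp⟩
    rw [List.eq_of_mem_replicate hw]
    exact ⟨ha, haU⟩
  | add x y _ _ hx hy =>
    obtain ⟨T, Q, hT, hQ, hd⟩ := hx
    obtain ⟨T', Q', hT', hQ', hd'⟩ := hy
    refine ⟨T ++ T', Q * (T'.map linForm).prod + Q' * (T.map linForm).prod, ?_, ?_, ?_⟩
    · intro w hw
      rcases List.mem_append.1 hw with h | h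
      exacts [hT w h, hT' w h]
    · rw [List.map_append, List.prod_append]
      simp only [map_add, map_mul]
      rw [← hQ, ← hQ']
      ring
    · rw [List.length_append]
      have h1 := totalDegree_prod_linForm T
      have h2 := totalDegree_prod_linForm T'
      have h3 := MvPolynomial.totalDegree_add (Q * (T'.map linForm).prod)
        (Q' * (T.map linForm).prod)
      have h4 := MvPolynomial.totalDegree_mul Q (T'.map linForm).prod
      have h5 := MvPolynomial.totalDegree_mul Q' (T.map linForm).prod
      rcases le_max_iff.1 h3 with h | h <;> omega
  | smul c x _ hx =>
    obtain ⟨T, Q, hT, hQ, hd⟩ := hx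
    refine ⟨T, C c * Q, hT, ?_, ?_⟩
    · rw [map_mul, ofPoly_C, Algebra.smul_def, ← hQ, mul_assoc]
    · have := MvPolynomial.totalDegree_mul (C c) Q
      rw [MvPolynomial.totalDegree_C] at this
      omega
  | mem x hx =>
    obtain ⟨b, hb, hbU, rfl⟩ := hx
    refine ⟨List.ofFn b, 1, ?_, ?_, by simp⟩
    · intro w hw
      obtain ⟨i, rfl⟩ := List.mem_ofFn.1 hw
      exact ⟨hb.ne_zero i, hbU i⟩
    · rw [List.map_ofFn, List.prod_ofFn, map_prod, ← Finset.prod_mul_distrib, map_one]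
      exact Finset.prod_eq_one fun i _ => inv_mul_cancel₀ (lam_ne_zero (hb.ne_zero i))

/-- A fraction of negative degree with linear denominators and no poles vanishes. -/
lemma eq_zero_of_regular {k : ℕ} {U : Submodule K (Fin d → K)} {x : RatFun K d}
    (hreg : ∀ a ∈ U, a ≠ 0 → ∃ g, a ⬝ᵥ g = 1 ∧ expand a g x ∈ regular K d)
    (T : List (Fin d → K)) (hT : ∀ w ∈ T, w ≠ 0 ∧ w ∈ U) (Q : MvPolynomial (Fin d) K)
    (hQ : x * ofPoly (T.map linForm).prod = ofPoly Q)
    (hd : Q.totalDegree + (k + 1) ≤ T.length) : x = 0 := by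
  induction T generalizing Q with
  | nil => simp at hd
  | cons a T ih =>
    obtain ⟨ha, haU⟩ := hT a List.mem_cons_self
    obtain ⟨g, hag, hr⟩ := hreg a haU ha
    have h0 : (expand a g (ofPoly Q)).coeff 0 = 0 := by
      rw [← hQ, List.map_cons, List.prod_cons, map_mul ofPoly, mul_left_comm, map_mul,
        coeff_zero_mul_of_regular (expand_ofPoly_regular _ _ _)
          (by rw [map_mul]; exact mul_mem hr (expand_ofPoly_regular _ _ _)),
        expand_lam, proj_self hag, lam_zero]
      simp
    obtain ⟨q, rfl⟩ := linForm_dvd_of_coeff_zero a g Q h0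
    have hq : x * ofPoly (T.map linForm).prod = ofPoly q := by
      rw [List.map_cons, List.prod_cons, map_mul, map_mul, mul_left_comm] at hQ
      exact mul_left_cancel₀ (lam_ne_zero ha) hQ
    by_cases hq0 : q = 0
    · rw [hq0, map_zero, mul_eq_zero, map_eq_zero_iff _ ofPoly_injective] at hq
      refine hq.resolve_right fun hp => ?_
      obtain ⟨w, hw, hw0⟩ := List.mem_map.1 (List.prod_eq_zero_iff.1 hp)
      exact linForm_ne_zero (hT w (List.mem_cons_of_mem _ hw)).1 hw0
    · refine ih (fun w hw => hT w (List.mem_cons_of_mem _ hw)) q hq ?_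
      rw [MvPolynomial.totalDegree_mul_of_isDomain (linForm_ne_zero ha) hq0,
        totalDegree_linForm ha, List.length_cons] at hd
      omega

/-- Simple fractions on `U` and fractions with denominators in proper subspaces of `U` are
independent. -/
theorem simpleFrac_inf_degen (k : ℕ) (U : Submodule K (Fin d → K)) (hU : Module.finrank K U = k)
    (x : RatFun K d) (hx : x ∈ simpleFrac k U) (hx' : x ∈ degen U) : x = 0 := by
  induction k generalizing U x with
  | zero =>
    rw [Submodule.finrank_eq_zero] at hU
    subst hU
    have : IsEmpty {H : Submodule K (Fin d → K) // H < ⊥} := ⟨fun H => not_lt_bot H.2⟩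
    rw [degen, iSup_of_empty] at hx'
    exact (Submodule.mem_bot K).1 hx'
  | succ k ih =>
    have hreg : ∀ a ∈ U, a ≠ 0 → ∃ g, a ⬝ᵥ g = 1 ∧ expand a g x ∈ regular K d := by
      intro a haU ha
      obtain ⟨i, hi⟩ := Function.ne_iff.1 ha
      have hag : a ⬝ᵥ Pi.single i (a i)⁻¹ = 1 := by
        rw [dotProduct_single, mul_inv_cancel₀ hi]
      refine ⟨_, hag, ?_⟩
      generalize (Pi.single i (a i)⁻¹ : Fin d → K) = g at hag
      obtain ⟨h1, h2⟩ := simpleFrac_expand (a := a) (g := g) hx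
      refine regular_of_residue h2 (ih _ ?_ _ h1 (residue_degen hx'))
      have hrn := ((proj a g).domRestrict U).finrank_range_add_finrank_ker
      rw [LinearMap.range_domRestrict, hU] at hrn
      have hker : Module.finrank K (LinearMap.ker ((proj a g).domRestrict U)) = 1 := by
        refine finrank_eq_one (⟨⟨a, haU⟩, LinearMap.mem_ker.2 (proj_self hag)⟩ :
          LinearMap.ker ((proj a g).domRestrict U)) ?_ ?_
        · simpa [Subtype.ext_iff] using ha
        · rintro ⟨⟨u, hu⟩, hu'⟩
          exact ⟨u ⬝ᵥ g, Subtype.ext (Subtype.ext (eq_smul_of_proj hu').symm)⟩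
      omega
    have hne : U ≠ ⊥ := by
      rintro rfl
      simp at hU
    obtain ⟨a, haU, ha⟩ := U.exists_mem_ne_zero_of_ne_bot hne
    obtain ⟨T, Q, hT, hQ, hd⟩ := simpleFrac_degree ha haU hx
    exact eq_zero_of_regular hreg T hT Q hQ hd

/-! ### Constant-coefficient differential operators -/

lemma pderiv_comm (i j : Fin d) (P : MvPolynomial (Fin d) K) :
    pderiv i (pderiv j P) = pderiv j (pderiv i P) := by
  classical
  have h : ⁅(pderiv i : Derivation K (MvPolynomial (Fin d) K) (MvPolynomial (Fin d) K)),
      (pderiv j : Derivation K (MvPolynomial (Fin d) K) (MvPolynomial (Fin d) K))⁆ = 0 := by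
    apply MvPolynomial.derivation_ext
    intro k
    rw [Derivation.commutator_apply, pderiv_X, pderiv_X]
    simp only [Pi.single_apply]
    split_ifs <;> simp
  have := DFunLike.congr_fun h P
  rw [Derivation.commutator_apply] at this
  exact sub_eq_zero.1 this

lemma totalDegree_pderiv_le (i : Fin d) (P : MvPolynomial (Fin d) K) :
    (pderiv i P).totalDegree ≤ P.totalDegree - 1 := by
  classical
  refine Finset.sup_le fun m hm => ?_
  rw [MvPolynomial.mem_support_iff, coeff_pderiv] at hm
  have h := MvPolynomial.le_totalDegree (p := P) (s := m + Finsupp.single i 1)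
    (by rw [MvPolynomial.mem_support_iff]; exact left_ne_zero_of_mul hm)
  rw [Finsupp.sum_add_index' (fun _ => rfl) (fun _ _ _ => rfl), Finsupp.sum_single_index rfl] at h
  omega

lemma eq_C_of_pderiv [CharZero K] {P : MvPolynomial (Fin d) K} (h : ∀ i, pderiv i P = 0) :
    P = C (P.coeff 0) := by
  classical
  ext m
  rw [MvPolynomial.coeff_C]
  split_ifs with hm
  · rw [hm]
  · obtain ⟨i, hi⟩ := Finsupp.ne_iff.1 (Ne.symm hm)
    have h1 := coeff_pderiv (i := i) P (m - Finsupp.single i 1)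
    have hle : Finsupp.single i 1 ≤ m := by
      rw [Finsupp.single_le_iff]
      exact Nat.one_le_iff_ne_zero.2 hi
    rw [h i, coeff_zero, tsub_add_cancel_of_le hle] at h1
    refine (mul_eq_zero.1 h1.symm).resolve_right ?_
    exact Nat.cast_add_one_ne_zero _

/-- `Φ` is the action of `Sym(V*)` on rational functions by constant-coefficient differential
operators: the variable `X i` acts as a derivation extending the `i`-th partial derivative. -/
structure IsDiffAction (Φ : MvPolynomial (Fin d) K →ₐ[K] Module.End K (RatFun K d)) : Prop where
  leib : ∀ i x y, Φ (X i) (x * y) = x * Φ (X i) y + y * Φ (X i) x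
  res : ∀ i P, Φ (X i) (ofPoly P) = ofPoly (pderiv i P)

open scoped IsMulCommutative in
/-- Derivations extending the partial derivatives commute and hence assemble into an action of
the polynomial ring, which is `applyOp`. -/
lemma exists_diffAction (δ : Fin d → (RatFun K d →ₗ[K] RatFun K d))
    (hleib : ∀ i (x y : RatFun K d), δ i (x * y) = x * δ i y + y * δ i x)
    (hres : ∀ i (P : MvPolynomial (Fin d) K), δ i (ofPoly P) = ofPoly (pderiv i P)) :
    ∃ Φ : MvPolynomial (Fin d) K →ₐ[K] Module.End K (RatFun K d), IsDiffAction Φ ∧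
      ∀ D, applyOp δ D = Φ D := by
  have hcomm : ∀ i j, δ i * δ j = δ j * δ i := by
    intro i j
    ext x
    simp only [Module.End.mul_apply]
    obtain ⟨P, Q, hQ, rfl⟩ := IsFractionRing.div_surjective (A := MvPolynomial (Fin d) K) x
    have hQ0 : ofPoly Q ≠ 0 := by
      rw [Ne, map_eq_zero_iff _ ofPoly_injective]
      exact nonZeroDivisors.ne_zero hQ
    set y := algebraMap (MvPolynomial (Fin d) K) (RatFun K d) P /
      algebraMap (MvPolynomial (Fin d) K) (RatFun K d) Q with hy
    have hyQ : ofPoly P = y * ofPoly Q := (div_mul_cancel₀ _ hQ0).symm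
    have h1 : δ i (δ j (ofPoly P)) = δ j (δ i (ofPoly P)) := by
      rw [hres, hres, hres, hres, pderiv_comm]
    rw [hyQ] at h1
    simp only [hleib, map_add, hres, pderiv_comm i j] at h1
    have h2 : ofPoly Q * (δ i (δ j y) - δ j (δ i y)) = 0 := by linear_combination h1
    exact sub_eq_zero.1 ((mul_eq_zero.1 h2).resolve_left hQ0)
  have hs : ∀ x ∈ Set.range δ, ∀ y ∈ Set.range δ, x * y = y * x := by
    rintro _ ⟨i, rfl⟩ _ ⟨j, rfl⟩
    exact hcomm i j
  let A : Subalgebra K (Module.End K (RatFun K d)) := Algebra.adjoin K (Set.range δ)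
  have : IsMulCommutative A := Algebra.isMulCommutative_adjoin K hs
  let δ' : Fin d → A := fun i => ⟨δ i, Algebra.subset_adjoin ⟨i, rfl⟩⟩
  have hX : ∀ i, A.val (aeval (R := K) δ' (X i)) = δ i := fun i => by rw [aeval_X]; rfl
  refine ⟨A.val.comp (aeval (R := K) δ'), ⟨fun i x y => ?_, fun i P => ?_⟩, fun D => ?_⟩
  · rw [AlgHom.comp_apply, hX]
    exact hleib i x y
  · rw [AlgHom.comp_apply, hX]
    exact hres i P
  · conv_rhs => rw [D.as_sum]
    rw [applyOp, map_sum]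
    refine Finset.sum_congr rfl fun m _ => ?_
    rw [AlgHom.comp_apply, aeval_monomial, Finsupp.prod_fintype _ _ (fun _ => pow_zero _),
      ← List.prod_ofFn, ← Algebra.smul_def, map_smul, map_list_prod, List.map_ofFn]
    rfl

variable {Φ : MvPolynomial (Fin d) K →ₐ[K] Module.End K (RatFun K d)}

/-- Operators commute with multiplication by a coordinate up to a derivative of the operator. -/
lemma IsDiffAction.mul_X (h : IsDiffAction Φ) (i : Fin d) (D : MvPolynomial (Fin d) K)
    (f : RatFun K d) :
    Φ D (ofPoly (X i) * f) = ofPoly (X i) * Φ D f + Φ (pderiv i D) f := by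
  classical
  induction D using MvPolynomial.induction_on generalizing f with
  | C a =>
    rw [pderiv_C, map_zero, LinearMap.zero_apply, add_zero,
      show (C a : MvPolynomial (Fin d) K) = algebraMap K _ a from rfl, AlgHom.commutes]
    simp only [Module.algebraMap_end_apply, mul_smul_comm]
  | add p q hp hq =>
    simp only [map_add, LinearMap.add_apply, hp, hq]
    ring
  | mul_X p j hp =>
    rw [map_mul Φ, Module.End.mul_apply, h.leib, h.res, map_add, hp, Module.End.mul_apply,
      Derivation.leibniz, pderiv_X, pderiv_X]
    simp only [smul_eq_mul, map_add, LinearMap.add_apply, Pi.single_apply]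
    by_cases hij : i = j
    · subst hij
      simp [mul_comm (X i) (pderiv i p)]
      ring
    · simp [hij, Ne.symm hij, mul_comm (X j) (pderiv i p)]

lemma apply_linForm (γ : Fin d → K) (x : RatFun K d) :
    Φ (linForm γ) x = ∑ i, γ i • Φ (X i) x := by
  rw [linForm, map_sum, LinearMap.sum_apply]
  refine Finset.sum_congr rfl fun i _ => ?_
  rw [← MvPolynomial.smul_eq_C_mul, map_smul, LinearMap.smul_apply]

/-- The derivative in the direction `γ`. -/
noncomputable def IsDiffAction.dir (h : IsDiffAction Φ) (γ : Fin d → K) :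
    Derivation K (RatFun K d) (RatFun K d) :=
  Derivation.mk' (Φ (linForm γ)) fun x y => by
    simp only [apply_linForm, h.leib, smul_add, Finset.sum_add_distrib, smul_eq_mul,
      Finset.mul_sum, mul_smul_comm]

lemma IsDiffAction.dir_apply (h : IsDiffAction Φ) (γ : Fin d → K) (x : RatFun K d) :
    h.dir γ x = Φ (linForm γ) x := rfl

lemma IsDiffAction.dir_ofPoly (h : IsDiffAction Φ) (γ : Fin d → K) (P : MvPolynomial (Fin d) K) :
    h.dir γ (ofPoly P) = ofPoly (∑ i, C (γ i) * pderiv i P) := by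
  rw [h.dir_apply, apply_linForm, map_sum]
  refine Finset.sum_congr rfl fun i _ => ?_
  rw [h.res, map_mul, ofPoly_C, Algebra.smul_def]

lemma IsDiffAction.dir_lam (h : IsDiffAction Φ) (γ u : Fin d → K) :
    h.dir γ (lam u) = algebraMap K (RatFun K d) (γ ⬝ᵥ u) := by
  classical
  rw [lam, h.dir_ofPoly, ← ofPoly_C, dotProduct, map_sum C]
  congr 1
  refine Finset.sum_congr rfl fun i _ => ?_
  rw [linForm, map_sum, map_mul C]
  congr 1
  simp [pderiv_X, Pi.single_apply]

/-- The rational functions that are constant in the direction `γ`. -/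
noncomputable def IsDiffAction.consts (h : IsDiffAction Φ) (γ : Fin d → K) :
    Submonoid (RatFun K d) where
  carrier := {x | h.dir γ x = 0}
  one_mem' := (h.dir γ).map_one_eq_zero
  mul_mem' {x y} hx hy := by
    rw [Set.mem_ofPred_eq] at *
    rw [Derivation.leibniz, hx, hy, smul_zero, smul_zero, add_zero]

lemma IsDiffAction.inv_mem_consts (h : IsDiffAction Φ) {γ : Fin d → K} {x : RatFun K d}
    (hx : x ∈ h.consts γ) : x⁻¹ ∈ h.consts γ := by
  change h.dir γ x⁻¹ = 0
  rw [Derivation.leibniz_inv, show h.dir γ x = 0 from hx, smul_zero]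

/-- Directional derivatives act nilpotently on polynomials, also after multiplication by a function
that is constant in the direction. -/
lemma IsDiffAction.pow_dir_eq_zero (h : IsDiffAction Φ) {γ : Fin d → K} {c : RatFun K d}
    (hc : c ∈ h.consts γ) (n : ℕ) (P : MvPolynomial (Fin d) K) (hP : P.totalDegree ≤ n) :
    Φ (linForm γ ^ (n + 1)) (ofPoly P * c) = 0 := by
  have key : ∀ P : MvPolynomial (Fin d) K,
      Φ (linForm γ) (ofPoly P * c) = ofPoly (∑ i, C (γ i) * pderiv i P) * c := by
    intro P
    rw [← h.dir_apply, Derivation.leibniz, show h.dir γ c = 0 from hc, smul_zero, zero_add,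
      h.dir_ofPoly, smul_eq_mul, mul_comm]
  induction n generalizing P with
  | zero =>
    rw [zero_add, pow_one, key]
    rw [MvPolynomial.totalDegree_eq_zero_iff_eq_C.1 (Nat.le_zero.1 hP)]
    simp
  | succ n ih =>
    rw [pow_succ, map_mul Φ, Module.End.mul_apply, key]
    refine ih _ (MvPolynomial.totalDegree_finsetSum_le fun i _ => ?_)
    refine (MvPolynomial.totalDegree_mul _ _).trans ?_
    have := totalDegree_pderiv_le i P
    rw [MvPolynomial.totalDegree_C]
    omega

lemma map_mem_of_forall_X {M : Submodule K (RatFun K d)}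
    (hM : ∀ i, ∀ x ∈ M, Φ (X i) x ∈ M) (D : MvPolynomial (Fin d) K) {x : RatFun K d}
    (hx : x ∈ M) : Φ D x ∈ M := by
  induction D using MvPolynomial.induction_on generalizing x with
  | C a =>
    rw [show (C a : MvPolynomial (Fin d) K) = algebraMap K _ a from rfl, AlgHom.commutes]
    exact M.smul_mem a hx
  | add p q hp hq => rw [map_add]; exact M.add_mem (hp hx) (hq hx)
  | mul_X p j hp => rw [map_mul]; exact hp (hM j x hx)

/-! ### Fractions with poles along the given hyperplanes -/

/-- The fraction `1 / ∏_j v_j ^ n_j`. -/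
noncomputable def frac (v : Fin N → Fin d → K) (n : Fin N → ℕ) : RatFun K d :=
  (∏ j, lam (v j) ^ n j)⁻¹

/-- The set `J` of indices that occur in the exponent vector `n`. -/
def supp (n : Fin N → ℕ) : Finset (Fin N) := {j | n j ≠ 0}

/-- The span of the vectors `v_j`, `j ∈ J`, that occur in the denominator of `frac v n`. -/
def suppSpan (v : Fin N → Fin d → K) (n : Fin N → ℕ) : Submodule K (Fin d → K) :=
  Submodule.span K (v '' (supp n : Set (Fin N)))

lemma mem_supp {n : Fin N → ℕ} {j : Fin N} : j ∈ supp n ↔ n j ≠ 0 := by simp [supp]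

lemma span_range_eq_suppSpan (v : Fin N → Fin d → K) (n : Fin N → ℕ) :
    Submodule.span K (Set.range fun j : {j : Fin N // n j ≠ 0} => v (j : Fin N)) =
      suppSpan v n := by
  have : (supp n : Set (Fin N)) = {j | n j ≠ 0} := by ext j; simp [mem_supp]
  rw [suppSpan, this, Set.image_eq_range]
  rfl

lemma finrank_suppSpan_le (v : Fin N → Fin d → K) (n : Fin N → ℕ) :
    Module.finrank K (suppSpan v n) ≤ (supp n).card := by
  classical
  rw [suppSpan, ← Finset.coe_image]
  exact (finrank_span_finset_le_card _).trans Finset.card_image_le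

lemma card_supp_le (n : Fin N → ℕ) : (supp n).card ≤ ∑ j, n j := by
  rw [Finset.card_eq_sum_ones]
  calc ∑ j ∈ supp n, 1 ≤ ∑ j ∈ supp n, n j :=
        Finset.sum_le_sum fun j hj => Nat.one_le_iff_ne_zero.2 (mem_supp.1 hj)
    _ ≤ ∑ j, n j := Finset.sum_le_sum_of_subset (Finset.subset_univ _)

lemma le_card_supp {v : Fin N → Fin d → K} {n : Fin N → ℕ} (h : suppSpan v n = ⊤) :
    d ≤ (supp n).card := by
  have := finrank_suppSpan_le v n
  rwa [h, finrank_top, Module.finrank_fin_fun] at this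

lemma frac_mem_GD {v : Fin N → Fin d → K} {n : Fin N → ℕ} (h : suppSpan v n = ⊤) :
    frac v n ∈ GD v :=
  Submodule.subset_span ⟨n, by rw [span_range_eq_suppSpan, h], rfl⟩

lemma mul_frac_mem_ND {v : Fin N → Fin d → K} {n : Fin N → ℕ} (h : suppSpan v n ≠ ⊤)
    (P : MvPolynomial (Fin d) K) : ofPoly P * frac v n ∈ ND v :=
  Submodule.subset_span ⟨P, n, by rwa [span_range_eq_suppSpan], rfl⟩

lemma mul_frac_mem_RD (v : Fin N → Fin d → K) (n : Fin N → ℕ) (P : MvPolynomial (Fin d) K) :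
    ofPoly P * frac v n ∈ RD v :=
  Submodule.subset_span ⟨P, n, rfl⟩

lemma GD_le {v : Fin N → Fin d → K} {M : Submodule K (RatFun K d)}
    (h : ∀ n, suppSpan v n = ⊤ → frac v n ∈ M) : GD v ≤ M := by
  refine Submodule.span_le.2 ?_
  rintro _ ⟨n, hn, rfl⟩
  exact h n (by rwa [span_range_eq_suppSpan] at hn)

lemma ND_le {v : Fin N → Fin d → K} {M : Submodule K (RatFun K d)}
    (h : ∀ n P, suppSpan v n ≠ ⊤ → ofPoly P * frac v n ∈ M) : ND v ≤ M := by
  refine Submodule.span_le.2 ?_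
  rintro _ ⟨P, n, hn, rfl⟩
  exact h n P (by rwa [span_range_eq_suppSpan] at hn)

lemma RD_le {v : Fin N → Fin d → K} {M : Submodule K (RatFun K d)}
    (h : ∀ n P, ofPoly P * frac v n ∈ M) : RD v ≤ M := by
  refine Submodule.span_le.2 ?_
  rintro _ ⟨P, n, rfl⟩
  exact h n P

lemma frac_add (v : Fin N → Fin d → K) (n m : Fin N → ℕ) :
    frac v (n + m) = frac v n * frac v m := by
  simp [frac, pow_add, Finset.prod_mul_distrib, mul_comm]

lemma frac_single (v : Fin N → Fin d → K) (j : Fin N) (k : ℕ) :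
    frac v (Pi.single j k) = (lam (v j))⁻¹ ^ k := by
  classical
  rw [frac, Finset.prod_eq_single j (fun i _ hi => by rw [Pi.single_eq_of_ne hi, pow_zero])
    (fun h => absurd (Finset.mem_univ j) h), Pi.single_eq_same, inv_pow]

lemma lam_mul_frac_add_single {v : Fin N → Fin d → K} (hv : ∀ j, v j ≠ 0) (n : Fin N → ℕ)
    (j : Fin N) : lam (v j) * frac v (n + Pi.single j 1) = frac v n := by
  rw [frac_add, frac_single, pow_one, mul_left_comm, mul_inv_cancel₀ (lam_ne_zero (hv j)), mul_one]

lemma exists_eq_add_single {n : Fin N → ℕ} {j : Fin N} (hj : n j ≠ 0) :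
    ∃ n' : Fin N → ℕ, n = n' + Pi.single j 1 := by
  refine ⟨n - Pi.single j 1, (tsub_add_cancel_of_le fun i => ?_).symm⟩
  by_cases h : i = j
  · subst h
    rw [Pi.single_eq_same]
    exact Nat.one_le_iff_ne_zero.2 hj
  · rw [Pi.single_eq_of_ne h]
    exact Nat.zero_le _

lemma sum_add_single (n : Fin N → ℕ) (j : Fin N) :
    ∑ i, (n + Pi.single j 1 : Fin N → ℕ) i = ∑ i, n i + 1 := by
  simp [Finset.sum_add_distrib]

/-- Multiplying a fraction by a linear combination of its denominator vectors cancels one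
factor of the denominator in each term. -/
lemma lam_mul_frac_mem {v : Fin N → Fin d → K} (hv : ∀ j, v j ≠ 0) {n : Fin N → ℕ}
    {M : Submodule K (RatFun K d)} {S : Set (Fin N)} {p : RatFun K d}
    (hM : ∀ j ∈ S, ∃ n', n = n' + Pi.single j 1 ∧ p * frac v n' ∈ M) {u : Fin d → K}
    (hu : u ∈ Submodule.span K (v '' S)) : p * (lam u * frac v n) ∈ M := by
  induction hu using Submodule.span_induction with
  | mem x hx =>
    obtain ⟨j, hj, rfl⟩ := hx
    obtain ⟨n', rfl, h⟩ := hM j hj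
    rwa [lam_mul_frac_add_single hv]
  | zero => simp [lam_zero]
  | add x y _ _ hx hy =>
    rw [lam, linForm_add, map_add, add_mul, mul_add]
    exact M.add_mem hx hy
  | smul a x _ hx =>
    rw [lam_smul, mul_assoc, mul_left_comm, ← Algebra.smul_def]
    exact M.smul_mem a hx

lemma linForm_single (i : Fin d) : linForm (Pi.single i 1 : Fin d → K) = X i := by
  classical
  rw [linForm, Finset.sum_eq_single i (fun j _ hj => by rw [Pi.single_eq_of_ne hj, C_0, zero_mul])
    (fun h => absurd (Finset.mem_univ i) h), Pi.single_eq_same, C_1, one_mul]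

lemma mul_mem_ND {v : Fin N → Fin d → K} (Q : MvPolynomial (Fin d) K) {x : RatFun K d}
    (hx : x ∈ ND v) : ofPoly Q * x ∈ ND v := by
  have : ND v ≤ (ND v).comap (LinearMap.mulLeft K (ofPoly Q)) := ND_le fun n P hn => by
    rw [Submodule.mem_comap, LinearMap.mulLeft_apply, ← mul_assoc, ← map_mul]
    exact mul_frac_mem_ND hn _
  exact this hx

lemma frac_mem_polesIn (v : Fin N → Fin d → K) (n : Fin N → ℕ) :
    frac v n ∈ polesIn (suppSpan v n) := by
  rw [frac, ← Finset.prod_inv_distrib]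
  refine Subalgebra.prod_mem _ fun j _ => ?_
  by_cases hj : n j = 0
  · rw [hj, pow_zero, inv_one]
    exact Subalgebra.one_mem _
  · rw [← inv_pow]
    exact Subalgebra.pow_mem _ (inv_lam_mem
      (Submodule.subset_span (Set.mem_image_of_mem v (mem_supp.2 hj)))) _

lemma ND_le_degen (v : Fin N → Fin d → K) : ND v ≤ degen ⊤ := ND_le fun _ P hn =>
  polesIn_le_degen (lt_top_iff_ne_top.2 hn)
    (Subalgebra.mul_mem _ (ofPoly_mem _ P) (frac_mem_polesIn _ _))

/-- Fractions decompose: a numerator can be expressed in the denominator vectors as long as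
these span. -/
lemma GD_sup_ND {v : Fin N → Fin d → K} (hv : ∀ j, v j ≠ 0) : GD v ⊔ ND v = RD v := by
  refine le_antisymm (sup_le (GD_le fun n _ => ?_) (ND_le fun n P _ => mul_frac_mem_RD v n P))
    (RD_le fun n P => ?_)
  · simpa using mul_frac_mem_RD v n 1
  obtain ⟨s, hs⟩ : ∃ s, ∑ j, n j = s := ⟨_, rfl⟩
  induction s using Nat.strong_induction_on generalizing n P with
  | _ s ih =>
  by_cases hn : suppSpan v n = ⊤
  · induction P using MvPolynomial.induction_on with
    | C a =>
      rw [ofPoly_C, ← Algebra.smul_def]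
      exact Submodule.smul_mem _ a (Submodule.mem_sup_left (frac_mem_GD hn))
    | add p q hp hq =>
      rw [map_add, add_mul]
      exact Submodule.add_mem _ hp hq
    | mul_X p i _ =>
      rw [map_mul, ← linForm_single, mul_assoc]
      refine lam_mul_frac_mem hv (S := supp n) (fun j hj => ?_) (hn.ge Submodule.mem_top)
      obtain ⟨n', rfl⟩ := exists_eq_add_single (mem_supp.1 hj)
      rw [sum_add_single] at hs
      exact ⟨n', rfl, ih _ (by omega) n' p rfl⟩
  · exact Submodule.mem_sup_right (mul_frac_mem_ND hn P)

/-! ### Simple fractions -/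

/-- The span `S_Δ` of the simple fractions `1 / ∏_{j ∈ σ} v_j`, with `(v_j, j ∈ σ)` a basis.
These are the spanning fractions of total degree `d`: such an exponent vector is the indicator
function of a basis. -/
noncomputable def SD (v : Fin N → Fin d → K) : Submodule K (RatFun K d) :=
  Submodule.span K {x | ∃ n : Fin N → ℕ, (suppSpan v n = ⊤ ∧ ∑ j, n j = d) ∧ frac v n = x}

lemma SD_le {v : Fin N → Fin d → K} {M : Submodule K (RatFun K d)}
    (h : ∀ n, suppSpan v n = ⊤ → ∑ j, n j = d → frac v n ∈ M) : SD v ≤ M := by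
  refine Submodule.span_le.2 ?_
  rintro _ ⟨n, ⟨hn, hd⟩, rfl⟩
  exact h n hn hd

lemma SD_le_GD (v : Fin N → Fin d → K) : SD v ≤ GD v := SD_le fun _ hn _ => frac_mem_GD hn

instance SD_finite (v : Fin N → Fin d → K) : FiniteDimensional K (SD v) := by
  refine FiniteDimensional.span_of_finite K (Set.Finite.image _ ?_)
  refine (Set.finite_Iic (fun _ => d : Fin N → ℕ)).subset fun n hn j => ?_
  rw [← hn.2]
  exact Finset.single_le_sum (f := n) (fun _ _ => Nat.zero_le _) (Finset.mem_univ j)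

lemma SD_le_simpleFrac (v : Fin N → Fin d → K) : SD v ≤ simpleFrac d ⊤ := by
  classical
  refine SD_le fun n hn hd => Submodule.subset_span ?_
  have hc : (supp n).card = d := le_antisymm ((card_supp_le n).trans hd.le) (le_card_supp hn)
  have h1 : ∀ j ∈ supp n, n j = 1 := by
    have h2 : ∑ j ∈ supp n, 1 = ∑ j ∈ supp n, n j := by
      rw [← Finset.card_eq_sum_ones, hc]
      nth_rw 1 [← hd]
      symm
      refine Finset.sum_subset (Finset.subset_univ _) fun j _ hj => ?_
      by_contra h
      exact hj (mem_supp.2 h)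
    intro j hj
    exact ((Finset.sum_eq_sum_iff_of_le fun j hj =>
      Nat.one_le_iff_ne_zero.2 (mem_supp.1 hj)).1 h2 j hj).symm
  let e : Fin d ≃ supp n := ((supp n).equivFinOfCardEq hc).symm
  refine ⟨fun i => v (e i), ?_, fun _ => Submodule.mem_top, ?_⟩
  · refine linearIndependent_of_top_le_span_of_card_eq_finrank ?_ (by simp)
    rw [← hn, suppSpan]
    refine Submodule.span_mono ?_
    rintro _ ⟨j, hj, rfl⟩
    exact ⟨e.symm ⟨j, hj⟩, by simp⟩
  · rw [frac, ← Finset.prod_inv_distrib, Equiv.prod_comp e (fun j => (lam (v j))⁻¹),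
      Finset.prod_coe_sort (supp n) (fun j => (lam (v j))⁻¹)]
    symm
    refine Finset.prod_subset_one_on_sdiff (Finset.subset_univ _) (fun j hj => ?_) fun j hj => ?_
    · rw [Finset.mem_sdiff, mem_supp, not_not] at hj
      rw [hj.2, pow_zero, inv_one]
    · rw [h1 j hj, pow_one]

lemma eq_zero_of_mem_SD_of_mem_ND {v : Fin N → Fin d → K} {x : RatFun K d} (hx : x ∈ SD v)
    (hx' : x ∈ ND v) : x = 0 :=
  simpleFrac_inf_degen d ⊤ (by rw [finrank_top, Module.finrank_fin_fun]) x
    (SD_le_simpleFrac v hx) (ND_le_degen v hx')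

/-- Multiplication by a coordinate cancels a factor of a simple fraction, and what remains has
too few factors for the denominator to span. -/
lemma X_mul_mem_ND {v : Fin N → Fin d → K} (hv : ∀ j, v j ≠ 0) (i : Fin d) {x : RatFun K d}
    (hx : x ∈ SD v) : ofPoly (X i) * x ∈ ND v := by
  have : SD v ≤ (ND v).comap (LinearMap.mulLeft K (ofPoly (X i))) := by
    refine SD_le fun n hn hd => ?_
    rw [Submodule.mem_comap, LinearMap.mulLeft_apply, ← linForm_single,
      ← one_mul (ofPoly _ * frac v n)]
    refine lam_mul_frac_mem hv (S := supp n) (fun j hj => ?_) (hn.ge Submodule.mem_top)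
    obtain ⟨n', rfl⟩ := exists_eq_add_single (mem_supp.1 hj)
    rw [sum_add_single] at hd
    refine ⟨n', rfl, ?_⟩
    rw [← map_one ofPoly]
    refine mul_frac_mem_ND (fun h => ?_) 1
    have h1 := le_card_supp h
    have h2 := card_supp_le n'
    omega
  exact this hx

/-! ### The action on fractions -/

lemma exists_dotProduct_eq_zero {W : Submodule K (Fin d → K)} (hW : W ≠ ⊤) :
    ∃ γ : Fin d → K, γ ≠ 0 ∧ ∀ w ∈ W, γ ⬝ᵥ w = 0 := by
  classical
  obtain ⟨f, hf, hW⟩ := W.exists_le_ker_of_lt_top (lt_top_iff_ne_top.2 hW)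
  have key : ∀ w, (fun i => f (Pi.single i 1)) ⬝ᵥ w = f w := fun w => by
    rw [LinearMap.pi_apply_eq_sum_univ f w, dotProduct]
    refine Finset.sum_congr rfl fun i _ => ?_
    rw [smul_eq_mul, mul_comm]
    congr 2
    ext k
    simp [Pi.single_apply, eq_comm]
  refine ⟨fun i => f (Pi.single i 1), fun h => hf ?_, fun w hw => (key w).trans (hW hw)⟩
  refine LinearMap.ext fun w => ?_
  rw [← key, h, zero_dotProduct, LinearMap.zero_apply]

lemma IsDiffAction.frac_mem_consts (h : IsDiffAction Φ) {γ : Fin d → K} {v : Fin N → Fin d → K}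
    {n : Fin N → ℕ} (hn : ∀ k, n k ≠ 0 → γ ⬝ᵥ v k = 0) : frac v n ∈ h.consts γ := by
  refine h.inv_mem_consts (Submonoid.prod_mem _ fun k _ => ?_)
  by_cases hk : n k = 0
  · rw [hk, pow_zero]
    exact Submonoid.one_mem _
  · refine Submonoid.pow_mem _ ?_ _
    change h.dir γ (lam (v k)) = 0
    rw [h.dir_lam, hn k hk, map_zero]

/-- A derivative in a direction along which only `v_j` varies raises the exponent of `v_j`. -/
lemma IsDiffAction.apply_frac (h : IsDiffAction Φ) {γ : Fin d → K} {v : Fin N → Fin d → K}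
    {n : Fin N → ℕ} {j : Fin N} (hn : ∀ k, k ≠ j → n k ≠ 0 → γ ⬝ᵥ v k = 0) :
    Φ (linForm γ) (frac v n) = (-(n j * (γ ⬝ᵥ v j)) : K) • frac v (n + Pi.single j 1) := by
  classical
  have hsplit : n = Function.update n j 0 + Pi.single j (n j) := by
    ext k
    by_cases hk : k = j
    · subst hk; simp
    · simp [hk]
  have hc : h.dir γ (frac v (Function.update n j 0)) = 0 := h.frac_mem_consts fun k hk => by
    by_cases hkj : k = j
    · subst hkj; simp at hk
    · exact hn k hkj (by simpa [hkj] using hk)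
  have hp : ∀ m : ℕ, h.dir γ ((lam (v j))⁻¹ ^ m) =
      (-(m * (γ ⬝ᵥ v j)) : K) • (lam (v j))⁻¹ ^ (m + 1) := by
    intro m
    rw [Derivation.leibniz_pow, Derivation.leibniz_inv, h.dir_lam]
    rcases m with _ | m
    · simp
    · simp only [Algebra.smul_def, Algebra.algebraMap_self, RingHom.id_apply, nsmul_eq_mul,
        map_neg, map_mul, map_natCast, Nat.add_sub_cancel, Nat.cast_add, map_add, Nat.cast_one, map_one]
      ring
  have hfrac : frac v n = frac v (Function.update n j 0) * (lam (v j))⁻¹ ^ n j := by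
    conv_lhs => rw [hsplit, frac_add, frac_single]
  rw [frac_add, frac_single, pow_one, ← h.dir_apply, hfrac, Derivation.leibniz, hc, hp, smul_zero,
    add_zero, smul_eq_mul, mul_smul_comm, pow_succ, mul_assoc]

lemma IsDiffAction.X_mem_ND (h : IsDiffAction Φ) {v : Fin N → Fin d → K} (hv : ∀ j, v j ≠ 0)
    (i : Fin d) {x : RatFun K d} (hx : x ∈ ND v) : Φ (X i) x ∈ ND v := by
  have : ND v ≤ (ND v).comap (Φ (X i)) := ND_le fun n P hn => by
    rw [Submodule.mem_comap]
    have hfrac : frac v n = (ofPoly (∏ j, linForm (v j) ^ n j))⁻¹ := by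
      rw [map_prod, frac]
      simp only [map_pow]
    have h0 : ofPoly (∏ j, linForm (v j) ^ n j) ≠ 0 := by
      rw [Ne, map_eq_zero_iff _ ofPoly_injective]
      exact Finset.prod_ne_zero_iff.2 fun j _ => pow_ne_zero _ (linForm_ne_zero (hv j))
    set Q := ∏ j, linForm (v j) ^ n j
    have h1 : ofPoly Q * frac v n = 1 := by rw [hfrac, mul_inv_cancel₀ h0]
    have h2 := h.leib i (ofPoly Q) (frac v n)
    rw [h1, ← map_one ofPoly, h.res, h.res, Derivation.map_one_eq_zero, map_zero] at h2
    have h3 : Φ (X i) (frac v n) = -(ofPoly (pderiv i Q) * frac v (n + n)) := by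
      rw [frac_add]
      linear_combination frac v n * (-h2) - Φ (X i) (frac v n) * h1
    rw [h.leib, h.res, h3]
    have h4 : ofPoly P * -(ofPoly (pderiv i Q) * frac v (n + n)) +
        frac v n * ofPoly (pderiv i P) =
        ofPoly (-(P * pderiv i Q)) * frac v (n + n) + ofPoly (pderiv i P) * frac v n := by
      rw [map_neg, map_mul]; ring
    have h5 : suppSpan v (n + n) = suppSpan v n := by
      have : supp (n + n) = supp n := by ext j; simp [mem_supp]
      rw [suppSpan, this]; rfl
    rw [h4]
    exact Submodule.add_mem _ (mul_frac_mem_ND (h5 ▸ hn) _) (mul_frac_mem_ND hn _)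
  exact this hx

lemma IsDiffAction.apply_mem_ND (h : IsDiffAction Φ) {v : Fin N → Fin d → K} (hv : ∀ j, v j ≠ 0)
    (D : MvPolynomial (Fin d) K) {x : RatFun K d} (hx : x ∈ ND v) : Φ D x ∈ ND v :=
  map_mem_of_forall_X (fun i _ hx => h.X_mem_ND hv i hx) D hx

/-- Degenerate fractions are torsion: a denominator whose vectors do not span is constant in some
direction, and a high derivative in that direction kills the numerator. -/
lemma IsDiffAction.exists_apply_eq_zero (h : IsDiffAction Φ) {v : Fin N → Fin d → K}
    {x : RatFun K d} (hx : x ∈ ND v) : ∃ D, D ≠ 0 ∧ Φ D x = 0 := by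
  let T : Submodule K (RatFun K d) :=
    { carrier := {x | ∃ D, D ≠ 0 ∧ Φ D x = 0}
      zero_mem' := ⟨1, one_ne_zero, map_zero _⟩
      add_mem' := by
        rintro x y ⟨D, hD, hx⟩ ⟨D', hD', hy⟩
        refine ⟨D * D', mul_ne_zero hD hD', ?_⟩
        rw [map_add, map_mul, Module.End.mul_apply, Module.End.mul_apply, hy, map_zero, add_zero,
          ← Module.End.mul_apply, ← map_mul, mul_comm, map_mul, Module.End.mul_apply, hx, map_zero]
      smul_mem' := by
        rintro a x ⟨D, hD, hx⟩
        exact ⟨D, hD, by rw [map_smul, hx, smul_zero]⟩ }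
  have : ND v ≤ T := ND_le fun n P hn => by
    obtain ⟨γ, hγ, hn⟩ := exists_dotProduct_eq_zero hn
    exact ⟨linForm γ ^ (P.totalDegree + 1), pow_ne_zero _ (linForm_ne_zero hγ),
      h.pow_dir_eq_zero (h.frac_mem_consts fun k hk =>
        hn _ (Submodule.subset_span (Set.mem_image_of_mem v (mem_supp.2 hk)))) _ P le_rfl⟩
  exact this hx

/-! ### Simple fractions generate all spanning fractions -/

/-- If exactly `d` vectors occur in a spanning denominator, derivatives dual to this basis
produce all exponents from the simple fraction. -/
lemma IsDiffAction.frac_mem_of_card_eq [CharZero K] (h : IsDiffAction Φ) {v : Fin N → Fin d → K}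
    {M : Submodule K (RatFun K d)} (hM : ∀ γ, ∀ x ∈ M, Φ (linForm γ) x ∈ M) (hSD : SD v ≤ M)
    {n : Fin N → ℕ} (hn : suppSpan v n = ⊤) (hc : (supp n).card = d) : frac v n ∈ M := by
  classical
  obtain ⟨s, hs⟩ : ∃ s, ∑ j, n j = s := ⟨_, rfl⟩
  induction s generalizing n with
  | zero =>
    have := card_supp_le n
    exact hSD (Submodule.subset_span ⟨n, ⟨hn, by omega⟩, rfl⟩)
  | succ s ih =>
    by_cases hd : ∑ j, n j = d
    · exact hSD (Submodule.subset_span ⟨n, ⟨hn, hd⟩, rfl⟩)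
    obtain ⟨j, hj⟩ : ∃ j, 2 ≤ n j := by
      by_contra! hlt
      refine hd (le_antisymm ?_ (hc ▸ card_supp_le n))
      rw [← hc, Finset.card_eq_sum_ones, supp, Finset.sum_filter]
      refine Finset.sum_le_sum fun j _ => ?_
      have := hlt j
      split_ifs <;> omega
    obtain ⟨n', rfl⟩ := exists_eq_add_single (n := n) (j := j) (by omega)
    have hj' : n' j ≠ 0 := by
      simp at hj
      omega
    have hsupp : supp (n' + Pi.single j 1) = supp n' := by
      ext k
      by_cases hk : k = j
      · subst hk; simp [mem_supp, hj']
      · simp [mem_supp, hk]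
    rw [sum_add_single] at hs
    rw [hsupp] at hc
    rw [suppSpan, hsupp] at hn
    have hlt : Submodule.span K (v '' ((supp n').erase j : Finset (Fin N))) ≠ ⊤ := by
      intro htop
      have h1 := finrank_span_finset_le_card (R := K) (((supp n').erase j).image v)
      rw [Set.finrank, Finset.coe_image, htop, finrank_top, Module.finrank_fin_fun] at h1
      have h2 := Finset.card_image_le (s := (supp n').erase j) (f := v)
      have h3 := Finset.card_erase_lt_of_mem (mem_supp.2 hj')
      omega
    obtain ⟨γ, hγ, hγ'⟩ := exists_dotProduct_eq_zero hlt
    have hk : ∀ k, k ≠ j → n' k ≠ 0 → γ ⬝ᵥ v k = 0 := fun k hkj hk =>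
      hγ' _ (Submodule.subset_span
        (Set.mem_image_of_mem v (Finset.mem_erase.2 ⟨hkj, mem_supp.2 hk⟩)))
    have hγj : γ ⬝ᵥ v j ≠ 0 := by
      intro h0
      apply hγ
      have hle : Submodule.span K (v '' (supp n' : Set (Fin N))) ≤
          LinearMap.ker (dotProductBilin K K γ) := by
        refine Submodule.span_le.2 ?_
        rintro _ ⟨k, hk', rfl⟩
        by_cases hkj : k = j
        · subst hkj; exact h0
        · exact hk k hkj (mem_supp.1 hk')
      rw [hn] at hle
      exact dotProduct_eq_zero _ fun w => hle (Submodule.mem_top (x := w))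
    have h1 := hM γ _ (ih hn hc (by omega))
    rw [h.apply_frac hk] at h1
    exact (M.smul_mem_iff (neg_ne_zero.2 (mul_ne_zero (Nat.cast_ne_zero.2 hj') hγj))).1 h1

/-- A subspace that contains the simple fractions and is stable under derivatives contains all
spanning fractions: a relation between the vectors of the denominator is used to remove one of
them, raising the exponent of another. -/
lemma IsDiffAction.frac_mem [CharZero K] (h : IsDiffAction Φ) {v : Fin N → Fin d → K}
    (hv : ∀ j, v j ≠ 0)
    {M : Submodule K (RatFun K d)} (hM : ∀ γ, ∀ x ∈ M, Φ (linForm γ) x ∈ M) (hSD : SD v ≤ M)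
    {n : Fin N → ℕ} (hn : suppSpan v n = ⊤) : frac v n ∈ M := by
  classical
  obtain ⟨c, hc⟩ : ∃ c, (supp n).card = c := ⟨_, rfl⟩
  induction c using Nat.strong_induction_on generalizing n with
  | _ c ih =>
  by_cases hcd : (supp n).card = d
  · exact h.frac_mem_of_card_eq hM hSD hn hcd
  have hdep : ¬ LinearIndepOn K v (supp n : Set (Fin N)) := by
    intro hli
    have h1 := hli.fintype_card_le_finrank
    have h2 := le_card_supp hn
    simp at h1
    omega
  obtain ⟨k, hk, hkmem⟩ : ∃ k ∈ supp n,
      v k ∈ Submodule.span K (v '' ((supp n : Set (Fin N)) \ {k})) := by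
    rw [linearIndepOn_iff_notMem_span] at hdep
    push Not at hdep
    exact hdep
  -- By minimality of `S`, every vector of `S` occurs in the relation that expresses `v k`.
  obtain ⟨S, ⟨hSn, hkS⟩, hmin⟩ := exists_minimal_of_wellFoundedLT
    (fun S : Finset (Fin N) => S ⊆ (supp n).erase k ∧ v k ∈ Submodule.span K (v '' S))
    ⟨(supp n).erase k, subset_rfl, by rwa [Finset.coe_erase]⟩
  have hexch : ∀ j ∈ S, Submodule.span K (v '' ((supp n).erase j : Finset (Fin N))) = ⊤ := by
    intro j hj
    have hj1 := Finset.mem_erase.1 (hSn hj)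
    have hnot : v k ∉ Submodule.span K (v '' (S.erase j : Finset (Fin N))) := fun hmem =>
      Finset.notMem_erase j S
        (hmin ⟨(Finset.erase_subset _ _).trans hSn, hmem⟩ (Finset.erase_subset _ _) hj)
    have hins : v k ∈ Submodule.span K (insert (v j) (v '' (S.erase j : Finset (Fin N)))) := by
      rwa [← Set.image_insert_eq, ← Finset.coe_insert, Finset.insert_erase hj]
    have hvj := mem_span_insert_exchange hins hnot
    have hvj' : v j ∈ Submodule.span K (v '' ((supp n).erase j : Finset (Fin N))) := by
      refine Submodule.span_mono ?_ hvj
      rw [← Set.image_insert_eq, ← Finset.coe_insert]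
      refine Set.image_mono (Finset.coe_subset.2 (Finset.insert_subset_iff.2 ⟨?_, ?_⟩))
      · exact Finset.mem_erase.2 ⟨hj1.1.symm, hk⟩
      · exact Finset.erase_subset_erase _ (hSn.trans (Finset.erase_subset _ _))
    rw [eq_top_iff, ← hn, suppSpan, Submodule.span_le]
    rintro _ ⟨i, hi, rfl⟩
    by_cases hij : i = j
    · rw [hij]; exact hvj'
    · exact Submodule.subset_span (Set.mem_image_of_mem v (Finset.mem_erase.2 ⟨hij, hi⟩))
  -- Each step raises the exponent of `v k`, so the sum of the other exponents drops until one of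
  -- the vectors of `S` disappears; by `hexch`, the remaining vectors still span.
  have inner : ∀ t, ∀ n' : Fin N → ℕ, supp n' = supp n → ∑ j ∈ Finset.univ.erase k, n' j = t →
      frac v n' ∈ M := by
    intro t
    induction t using Nat.strong_induction_on with
    | _ t iht =>
    intro n' hn' ht
    rw [← lam_mul_frac_add_single hv n' k, ← one_mul (lam (v k) * _)]
    refine lam_mul_frac_mem hv (fun j hj => ?_) hkS
    have hj1 := Finset.mem_erase.1 (hSn hj)
    obtain ⟨m, rfl⟩ := exists_eq_add_single (mem_supp.1 (hn' ▸ hj1.2))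
    refine ⟨m + Pi.single k 1, by rw [add_right_comm], ?_⟩
    rw [one_mul]
    have hsum : ∑ i ∈ Finset.univ.erase k, (m + Pi.single k 1 : Fin N → ℕ) i <
        ∑ i ∈ Finset.univ.erase k, (m + Pi.single j 1 : Fin N → ℕ) i := by
      refine Finset.sum_lt_sum (fun i hi => ?_)
        ⟨j, Finset.mem_erase.2 ⟨hj1.1, Finset.mem_univ j⟩, ?_⟩
      · simp [Pi.single_eq_of_ne (Finset.ne_of_mem_erase hi)]
      · simp [Pi.single_eq_of_ne hj1.1]
    by_cases hmj : m j = 0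
    · have hs' : supp (m + Pi.single k 1) = (supp n).erase j := by
        rw [← hn']
        ext i
        have hki : (m + Pi.single j 1 : Fin N → ℕ) k ≠ 0 := mem_supp.1 (hn' ▸ hk)
        by_cases hik : i = k
        · subst hik
          simp only [mem_supp, Finset.mem_erase]
          exact ⟨fun _ => ⟨hj1.1.symm, hki⟩, fun _ => by simp⟩
        · by_cases hij : i = j
          · subst hij; simp [mem_supp, hmj, hik]
          · simp [mem_supp, hik, hij]
      refine ih _ ?_ (n := m + Pi.single k 1) ?_ rfl
      · rw [hs', ← hc]
        exact Finset.card_erase_lt_of_mem hj1.2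
      · rw [suppSpan, hs']
        exact hexch j hj
    · refine iht _ (ht ▸ hsum) _ ?_ rfl
      rw [← hn']
      ext i
      have hki : (m + Pi.single j 1 : Fin N → ℕ) k ≠ 0 := mem_supp.1 (hn' ▸ hk)
      by_cases hik : i = k
      · subst hik
        simp only [mem_supp]
        exact ⟨fun _ => hki, fun _ => by simp⟩
      · by_cases hij : i = j
        · subst hij; simp [mem_supp, hmj]
        · simp [mem_supp, hik, hij]
  exact inner _ n rfl rfl

/-! ### Independence over the differential operators -/

/-- Differential operators applied to a basis of the simple fractions are independent modulo
`N_Δ`: multiplication by a coordinate kills simple fractions modulo `N_Δ`, so its commutator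
with the operators differentiates a relation, until its coefficients are constants. -/
lemma IsDiffAction.coeff_eq_zero [CharZero K] (h : IsDiffAction Φ) {v : Fin N → Fin d → K}
    (hv : ∀ j, v j ≠ 0) {ι : Type*} [Fintype ι] (b : Module.Basis ι K (SD v))
    (c : ι → MvPolynomial (Fin d) K) (hc : ∑ k, Φ (c k) (b k) ∈ ND v) : c = 0 := by
  obtain ⟨n, hn⟩ : ∃ n, ∀ k, (c k).totalDegree ≤ n :=
    ⟨∑ k, (c k).totalDegree,
      fun k => Finset.single_le_sum (f := fun k => (c k).totalDegree) (fun _ _ => Nat.zero_le _)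
        (Finset.mem_univ k)⟩
  have hconst : ∀ a : ι → K, ∑ k, Φ (C (a k)) (b k) ∈ ND v → a = 0 := by
    intro a ha
    have h1 : ∑ k, Φ (C (a k)) (b k) = ((∑ k, a k • b k : SD v) : RatFun K d) := by
      rw [Submodule.coe_sum]
      refine Finset.sum_congr rfl fun k _ => ?_
      rw [show (C (a k) : MvPolynomial (Fin d) K) = algebraMap K _ (a k) from rfl, AlgHom.commutes]
      rfl
    rw [h1] at ha
    have h2 : ∑ k, a k • b k = 0 := Subtype.ext (eq_zero_of_mem_SD_of_mem_ND (Subtype.prop _) ha)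
    exact funext (Fintype.linearIndependent_iff.1 b.linearIndependent a h2)
  induction n generalizing c with
  | zero =>
    have hC : ∀ k, c k = C ((c k).coeff 0) := fun k =>
      MvPolynomial.totalDegree_eq_zero_iff_eq_C.1 (Nat.le_zero.1 (hn k))
    have := hconst (fun k => (c k).coeff 0) (by simpa only [← hC] using hc)
    ext1 k
    rw [hC k, congrFun this k, Pi.zero_apply, C_0, Pi.zero_apply]
  | succ n ih =>
    have hd : ∀ i k, pderiv i (c k) = 0 := by
      intro i
      refine congrFun (ih (fun k => pderiv i (c k)) ?_ fun k => ?_)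
      · have h1 : ∑ k, Φ (pderiv i (c k)) (b k) =
            ∑ k, Φ (c k) (ofPoly (X i) * (b k : RatFun K d)) -
              ofPoly (X i) * ∑ k, Φ (c k) (b k) := by
          rw [Finset.mul_sum, ← Finset.sum_sub_distrib]
          refine Finset.sum_congr rfl fun k _ => ?_
          rw [h.mul_X, add_sub_cancel_left]
        rw [h1]
        exact Submodule.sub_mem _
          (Submodule.sum_mem _ fun k _ => h.apply_mem_ND hv _ (X_mul_mem_ND hv i (b k).2))
          (mul_mem_ND _ hc)
      · have h1 := totalDegree_pderiv_le i (c k)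
        have h2 := hn k
        omega
    have hC : ∀ k, c k = C ((c k).coeff 0) := fun k => eq_C_of_pderiv fun i => hd i k
    have := hconst (fun k => (c k).coeff 0) (by simpa only [← hC] using hc)
    ext1 k
    rw [hC k, congrFun this k, Pi.zero_apply, C_0, Pi.zero_apply]

lemma IsDiffAction.exists_coeff [CharZero K] (h : IsDiffAction Φ) {v : Fin N → Fin d → K}
    (hv : ∀ j, v j ≠ 0) {ι : Type*} [Fintype ι] (b : Module.Basis ι K (SD v))
    {x : RatFun K d} (hx : x ∈ GD v) :
    ∃ c : ι → MvPolynomial (Fin d) K, x = ∑ k, Φ (c k) (b k) := by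
  let M : Submodule K (RatFun K d) :=
    { carrier := {x | ∃ c : ι → MvPolynomial (Fin d) K, x = ∑ k, Φ (c k) (b k)}
      zero_mem' := ⟨0, by simp⟩
      add_mem' := by
        rintro x y ⟨c, rfl⟩ ⟨c', rfl⟩
        exact ⟨c + c', by simp [Finset.sum_add_distrib]⟩
      smul_mem' := by
        rintro a x ⟨c, rfl⟩
        exact ⟨a • c, by simp [Finset.smul_sum]⟩ }
  have hM : ∀ γ, ∀ x ∈ M, Φ (linForm γ) x ∈ M := by
    rintro γ x ⟨c, rfl⟩
    exact ⟨fun k => linForm γ * c k, by simp [map_sum]⟩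
  have hSD : SD v ≤ M := fun x hx => by
    refine ⟨fun k => C (b.repr ⟨x, hx⟩ k), ?_⟩
    have h1 := congrArg Subtype.val (b.sum_repr ⟨x, hx⟩)
    rw [Submodule.coe_sum] at h1
    refine h1.symm.trans ?_
    refine Finset.sum_congr rfl fun k _ => ?_
    change _ = Φ (algebraMap K _ (b.repr ⟨x, hx⟩ k)) (b k)
    rw [AlgHom.commutes, Module.algebraMap_end_apply, Submodule.coe_smul]
  exact GD_le (M := M) (fun n hn => h.frac_mem hv hM hSD hn) hx

end BrionVergne

/-- Brion–Vergne structure theorem: `R_Δ = G_Δ ⊕ N_Δ`, `N_Δ` is the torsion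
submodule for the `Sym(V*)`-action by constant-coefficient differential operators,
and `G_Δ` is a free `Sym(V*)`-module. -/
theorem stmt17 {K : Type*} [Field K] [CharZero K] (d N : ℕ)
    (v : Fin N → Fin d → K)
    (hspan : Submodule.span K (Set.range v) = ⊤)
    (hnz : ∀ j, v j ≠ 0)
    (hncol : ∀ j k : Fin N, j ≠ k → ∀ c : K, v j ≠ c • v k)
    (δ : Fin d → (FractionRing (MvPolynomial (Fin d) K) →ₗ[K]
        FractionRing (MvPolynomial (Fin d) K)))
    (hleib : ∀ i (x y : FractionRing (MvPolynomial (Fin d) K)),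
      δ i (x * y) = x * δ i y + y * δ i x)
    (hres : ∀ i (P : MvPolynomial (Fin d) K),
      δ i (algebraMap (MvPolynomial (Fin d) K) (FractionRing (MvPolynomial (Fin d) K)) P) =
        algebraMap (MvPolynomial (Fin d) K) (FractionRing (MvPolynomial (Fin d) K))
          (MvPolynomial.pderiv i P)) :
    (GD v ⊔ ND v = RD v) ∧ (GD v ⊓ ND v = ⊥) ∧
    (∀ x ∈ RD v,
      (x ∈ ND v ↔ ∃ D : MvPolynomial (Fin d) K, D ≠ 0 ∧ applyOp δ D x = 0)) ∧
    (∃ (m : ℕ) (b : Fin m → FractionRing (MvPolynomial (Fin d) K)),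
      (∀ i, b i ∈ GD v) ∧
      ∀ x ∈ GD v, ∃! c : Fin m → MvPolynomial (Fin d) K,
        x = ∑ i, applyOp δ (c i) (b i)) := by
  obtain ⟨Φ, h, hΦ⟩ := BrionVergne.exists_diffAction δ hleib hres
  simp only [hΦ]
  let b := Module.finBasis K (BrionVergne.SD v)
  have hsup := BrionVergne.GD_sup_ND hnz
  have hinf : GD v ⊓ ND v = ⊥ := by
    rw [eq_bot_iff]
    rintro x ⟨hG, hN⟩
    obtain ⟨c, rfl⟩ := h.exists_coeff hnz b hG
    simp [h.coeff_eq_zero hnz b c hN]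
  refine ⟨hsup, hinf, fun x hx => ⟨h.exists_apply_eq_zero, ?_⟩, _, fun i => (b i : _),
    fun i => BrionVergne.SD_le_GD v (b i).2, fun x hx => ?_⟩
  · rintro ⟨D, hD, hDx⟩
    rw [← hsup] at hx
    obtain ⟨g, hg, y, hy, rfl⟩ := Submodule.mem_sup.1 hx
    obtain ⟨c, rfl⟩ := h.exists_coeff hnz b hg
    -- `D` annihilates the sum, so `D` maps its component in `G_Δ` into `N_Δ`.
    have h1 : ∑ k, Φ (D * c k) (b k) ∈ ND v := by
      have h2 : ∑ k, Φ (D * c k) (b k) = -Φ D y := by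
        rw [map_add] at hDx
        rw [← eq_neg_of_add_eq_zero_left hDx, map_sum]
        simp
      rw [h2]
      exact Submodule.neg_mem _ (h.apply_mem_ND hnz D hy)
    have h3 := h.coeff_eq_zero hnz b (fun k => D * c k) h1
    have h4 : ∀ k, c k = 0 := fun k => (mul_eq_zero.1 (congrFun h3 k)).resolve_left hD
    simpa [h4] using hy
  · obtain ⟨c, rfl⟩ := h.exists_coeff hnz b hx
    refine ⟨c, rfl, fun c' hc' => ?_⟩
    have h1 : ∑ k, Φ ((c' - c) k) (b k) = 0 := by
      simp only [Pi.sub_apply, map_sub, LinearMap.sub_apply, Finset.sum_sub_distrib]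
      exact sub_eq_zero.2 hc'.symm
    exact sub_eq_zero.1 (h.coeff_eq_zero hnz b _ (h1 ▸ Submodule.zero_mem _))
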